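/- Let f₁,…,f_M : ℝ^d → ℝ and 0 ≤ O < M. Define φ(θ) as the (O+1)-st largest value among f₁(θ),…,f_M(θ), and φ_S(θ) = max_{m ∈ S} f_m(θ) for S ⊆ {1,…,M} with |S| = M − O. If S⋆ attains the minimum of inf φ_S over all such subsets, and this minimum is attained by φ_{S⋆} at some point, then every global minimizer of φ_{S⋆} is a global minimizer of φ. -/

import Mathlib

/-- The (O+1)-st largest component of `z`. -/
noncomputable def pctl {M : ℕ} (O : ℕ) (hO : O < M) (z : Fin M → ℝ) : ℝ :=
  z (Tuple.sort z ⟨M - 1 - O, by omega⟩)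

/-- The percentile is a lower bound for the maximum over any `M - O` components. -/
theorem pctl_le_sup' {M O : ℕ} (hO : O < M) (z : Fin M → ℝ) (S : Finset (Fin M))
    (hS : S.card = M - O) (hne : S.Nonempty) : pctl O hO z ≤ S.sup' hne z := by
  by_contra! h
  rw [Finset.sup'_lt_iff] at h
  have hsub : S.map (Tuple.sort z).symm.toEmbedding ⊆ Finset.Iio ⟨M - 1 - O, by omega⟩ := by
    intro j hj
    obtain ⟨m, hm, rfl⟩ := Finset.mem_map.mp hj
    rw [Finset.mem_Iio]
    by_contra! hle
    have hmono := Tuple.monotone_sort z hle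
    simp only [Function.comp_apply, Equiv.coe_toEmbedding, Equiv.apply_symm_apply] at hmono
    exact (h m hm).not_ge hmono
  have hle := Finset.card_le_card hsub
  rw [Finset.card_map, Fin.card_Iio] at hle
  simp only at hle
  omega

/-- Some `M - O` components are all bounded above by the percentile. -/
theorem exists_card_eq_forall_le_pctl {M O : ℕ} (hO : O < M) (z : Fin M → ℝ) :
    ∃ S : Finset (Fin M), S.card = M - O ∧ ∀ m ∈ S, z m ≤ pctl O hO z := by
  refine ⟨(Finset.Iic ⟨M - 1 - O, by omega⟩).map (Tuple.sort z).toEmbedding, ?_, ?_⟩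
  · rw [Finset.card_map, Fin.card_Iic]
    simp only
    omega
  · intro m hm
    obtain ⟨j, hj, rfl⟩ := Finset.mem_map.mp hm
    exact Tuple.monotone_sort z (Finset.mem_Iic.mp hj)

/-- If S⋆ attains the minimum of inf φ_S over subsets of size M - O,
and φ_{S⋆} attains its infimum at some point, then every global minimizer of
φ_{S⋆} is a global minimizer of the percentile objective φ. -/
theorem stmt_4 (d M O : ℕ) (hO : O < M) (fs : Fin M → (Fin d → ℝ) → ℝ)
    (Sstar : Finset (Fin M)) (hne : Sstar.Nonempty) (hcard : Sstar.card = M - O)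
    (hmin : ∀ (S : Finset (Fin M)) (hS : S.card = M - O),
      (⨅ θ : Fin d → ℝ, ((Sstar.sup' hne (fun m => fs m θ) : ℝ) : EReal)) ≤
        ⨅ θ : Fin d → ℝ,
          ((S.sup' (Finset.card_pos.mp (by rw [hS]; omega)) (fun m => fs m θ) : ℝ) : EReal))
    (hatt : ∃ θ₀ : Fin d → ℝ, ∀ θ, Sstar.sup' hne (fun m => fs m θ₀) ≤
      Sstar.sup' hne (fun m => fs m θ)) :
    ∀ θstar : Fin d → ℝ,
      (∀ θ, Sstar.sup' hne (fun m => fs m θstar) ≤ Sstar.sup' hne (fun m => fs m θ)) →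
      ∀ θ, pctl O hO (fun m => fs m θstar) ≤ pctl O hO (fun m => fs m θ) := by
  intro θstar hstar θ
  obtain ⟨S, hS, hle⟩ := exists_card_eq_forall_le_pctl hO (fun m => fs m θ)
  have hSne : S.Nonempty := Finset.card_pos.mp (by omega)
  have hstar_le : ((Sstar.sup' hne (fun m => fs m θstar) : ℝ) : EReal) ≤
      ((S.sup' hSne (fun m => fs m θ) : ℝ) : EReal) :=
    calc
      _ ≤ ⨅ θ : Fin d → ℝ, ((Sstar.sup' hne (fun m => fs m θ) : ℝ) : EReal) :=
        le_iInf fun θ => EReal.coe_le_coe_iff.mpr (hstar θ)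
      _ ≤ _ := hmin S hS
      _ ≤ _ := iInf_le _ θ
  calc
    _ ≤ Sstar.sup' hne (fun m => fs m θstar) := pctl_le_sup' hO _ Sstar hcard hne
    _ ≤ S.sup' hSne (fun m => fs m θ) := EReal.coe_le_coe_iff.mp hstar_le
    _ ≤ _ := Finset.sup'_le hSne _ hle
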